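/- arXiv:1707.02409 — 2 statements merged into one kernel-verified Lean document; each statement's English description precedes it below -/
import Mathlib

section
/- Let n be odd. Assume X_1 ~ Bernoulli(p) and X_k = X_{k−1} ⊕ U_k for k = 2,…,n with U_2,…,U_n i.i.d. Bernoulli(r) independent of X_1, and Y_k = X_k ⊕ V_k with V_1,…,V_n i.i.d. Bernoulli(α) independent of X^n, where p ∈ [1/2, 1), α ∈ (0, 1/2), (1−α)(1−p) > αp, and r/(1−r) < (α/(1−α))^{n−1}. Then P_c(X^n|Y^n) = (1−α)^n (1−r)^{n−1} Σ_{k=0}^{(n−1)/2} C(n,k) (α/(1−α))^k =: T, and there exists ε_L < T such that for every ε ∈ [ε_L, T]: 1 − ζ(ε)·Pr(Y^n = (1,…,1)) ≤ S(ε) ≤ 1 − ζ(ε)·α^n, where S(ε) := sup{P_c(Y^n|Z^n) : P_{Z^n|Y^n} a channel with output alphabet {0,1}^n, X^n–Y^n–Z^n a Markov chain, P_c(X^n|Z^n) ≤ ε} and ζ(ε) := (1−r)(T − ε)/(p((1−α)(1−r))^n − (1−p)(α(1−r))^n). Moreover, the lower bound is attained by the 2^n-ary Z-channel that maps every y^n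 ≠ (1,…,1) to itself with probability 1 and maps (1,…,1) to (0,…,0) with probability ζ(ε) and to (1,…,1) with probability 1 − ζ(ε). -/
open Finset

/-- `bern p b = p` if `b = true`, and `1 - p` otherwise. -/
noncomputable def bern (p : ℝ) (b : Bool) : ℝ := if b then p else 1 - p

/-- Joint pmf of `(X^n, Y^n)` where `X_1,…,X_n` are i.i.d. `Bernoulli(p)` and
`Y_k = X_k ⊕ V_k` with `V_1,…,V_n` i.i.d. `Bernoulli(α)` independent of `X^n`. -/
noncomputable def jointIID (n : ℕ) (p α : ℝ) :
    (Fin n → Bool) → (Fin n → Bool) → ℝ :=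
  fun x y => ∏ k, bern p (x k) * bern α (xor (x k) (y k))

/-- `F` is a channel (row-stochastic matrix) on a finite alphabet. -/
def IsChannel {V : Type*} [Fintype V] (F : V → V → ℝ) : Prop :=
  (∀ y z, 0 ≤ F y z) ∧ ∀ y, ∑ z, F y z = 1

/-- `P_c(X|Z)` where `Z` is the output of the channel `F` applied to `Y` and
`X – Y – Z` is a Markov chain, for joint pmf `P` of `(X,Y)`. -/
noncomputable def pcXZ {X V : Type*} [Fintype X] [Fintype V] [Nonempty X]
    (P : X → V → ℝ) (F : V → V → ℝ) : ℝ :=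
  ∑ z, ⨆ x, ∑ y, P x y * F y z

/-- `P_c(Y|Z)` where `Z` is the output of the channel `F` applied to `Y`. -/
noncomputable def pcYZ {X V : Type*} [Fintype X] [Fintype V] [Nonempty V]
    (P : X → V → ℝ) (F : V → V → ℝ) : ℝ :=
  ∑ z, ⨆ y, (∑ x, P x y) * F y z

/-- The Z-channel from `y0` to `z0` with crossover probability `ζ`: every `y ≠ y0` is
mapped to itself with probability `1`, while `y0` is mapped to `z0` with probability
`ζ` and to itself with probability `1 − ζ`. -/
noncomputable def Zch {V : Type*} [DecidableEq V] (y0 z0 : V) (ζ : ℝ) : V → V → ℝ :=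
  fun y z =>
    if y = y0 then (if z = z0 then ζ else if z = y0 then 1 - ζ else 0)
    else (if z = y then 1 else 0)

/-- Joint pmf of `(X^n, Y^n)` for odd `n = 2m+1`, where `X_1 ~ Bernoulli(p)`,
`X_k = X_{k−1} ⊕ U_k` with `U_2,…,U_n` i.i.d. `Bernoulli(r)` independent of `X_1`, and
`Y_k = X_k ⊕ V_k` with `V_1,…,V_n` i.i.d. `Bernoulli(α)` independent of `X^n`. -/
noncomputable def jointMarkov (m : ℕ) (p r α : ℝ) :
    (Fin (2 * m + 1) → Bool) → (Fin (2 * m + 1) → Bool) → ℝ :=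
  fun x y =>
    (bern p (x 0) * ∏ i : Fin (2 * m), bern r (xor (x i.succ) (x i.castSucc))) *
      ∏ k, bern α (xor (x k) (y k))

/-!
A channel with output `z` is guessed back to some `y'`, and then `g y'` is an admissible guess of
`X`, where `g` is the optimal guess of `X` from `Y`. On the event `Y = y ≠ y'` this costs at most
the largest loss `D` incurred by guessing `g y'` instead of `g y`, so privacy is gained at a rate
of at most `D` per `κ` units of utility, where `κ` is the least probability of a value of `Y`. A
Z-channel between a pair of values whose loss is exactly `D` has privacy gain `ζ * D` and utility
loss `ζ * P(Y = y₀)`, as long as `ζ` is too small to alter the optimal guesses at its target.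

For the Markov source the optimal guess is the constant vector of the majority bit of `y`: a
nonconstant vector costs a factor `r / (1 - r)`, which `(α / (1 - α)) ^ (n - 1)` outweighs. The loss
is largest when `y` is the all-ones vector and it is mistaken for the all-zeros vector.
-/

open scoped Topology

lemma ciSup_eq_of_forall_le_apply {ι α : Type*} [ConditionallyCompleteLattice α] {f : ι → α}
    {i : ι} (h : ∀ j, f j ≤ f i) : ⨆ j, f j = f i :=
  IsGreatest.csSup_eq ⟨Set.mem_range_self i, Set.forall_mem_range.2 h⟩

lemma eventually_mul_le (a : ℝ) {b : ℝ} (hb : 0 < b) : ∀ᶠ ζ : ℝ in 𝓝 0, ζ * a ≤ b :=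
  (Continuous.tendsto' (by fun_prop) (0 : ℝ) _ (zero_mul a)).eventually_le_const hb

lemma eventually_forall_add_mul_le {ι : Type*} [Finite ι] {a : ι → ℝ} {i₀ : ι}
    (ha : ∀ i ≠ i₀, a i < a i₀) (b : ι → ℝ) :
    ∀ᶠ ζ : ℝ in 𝓝 0, ∀ i, a i + ζ * b i ≤ a i₀ + ζ * b i₀ := by
  refine Filter.eventually_all.2 fun i ↦ ?_
  rcases eq_or_ne i i₀ with rfl | hi
  · exact Filter.Eventually.of_forall fun _ ↦ le_rfl
  have htendsto (j : ι) : Filter.Tendsto (fun ζ : ℝ ↦ a j + ζ * b j) (𝓝 0) (𝓝 (a j)) :=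
    Continuous.tendsto' (by fun_prop) _ _ (by ring)
  exact ((htendsto i).eventually_lt (htendsto i₀) (ha i hi)).mono fun _ ↦ le_of_lt

section Guessing

variable {X V : Type*}

/-- `g` is a maximum a posteriori rule for guessing `X` from `Y` under the joint pmf `P`. -/
def IsMAPRule (P : X → V → ℝ) (g : V → X) : Prop :=
  ∀ x y, P x y ≤ P (g y) y

/-- The loss in the probability of guessing `X` correctly on the event `Y = y` when the guess `g y'`
is made in place of `g y`. -/
def confusionLoss (P : X → V → ℝ) (g : V → X) (y y' : V) : ℝ :=
  P (g y) y - P (g y') y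

lemma confusionLoss_self (P : X → V → ℝ) (g : V → X) (y : V) : confusionLoss P g y y = 0 :=
  sub_self _

lemma IsMAPRule.sum_iSup [Fintype V] {P : X → V → ℝ} {g : V → X} (hg : IsMAPRule P g) :
    ∑ y, ⨆ x, P x y = ∑ y, P (g y) y :=
  Finset.sum_congr rfl fun y _ ↦ ciSup_eq_of_forall_le_apply (hg · y)

end Guessing

section Tradeoff

variable {X V : Type*} [Fintype X] [Fintype V]

/-- The privacy-utility tradeoff `S(ε)`: the best probability of guessing `Y` from the output of a
channel from which `X` is guessed with probability at most `ε`. -/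
noncomputable def optimalUtility [Nonempty X] [Nonempty V] (P : X → V → ℝ) (ε : ℝ) : ℝ :=
  sSup {u | ∃ F : V → V → ℝ, IsChannel F ∧ pcXZ P F ≤ ε ∧ u = pcYZ P F}

lemma pcYZ_le_optimalUtility_le [Nonempty X] [Nonempty V] {P : X → V → ℝ} {ε B : ℝ}
    {F₀ : V → V → ℝ} (hF₀ : IsChannel F₀) (hε : pcXZ P F₀ ≤ ε)
    (hB : ∀ F, IsChannel F → pcXZ P F ≤ ε → pcYZ P F ≤ B) :
    pcYZ P F₀ ≤ optimalUtility P ε ∧ optimalUtility P ε ≤ B := by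
  have hbound : B ∈ upperBounds {u | ∃ F, IsChannel F ∧ pcXZ P F ≤ ε ∧ u = pcYZ P F} := by
    rintro u ⟨F, hF, hFε, rfl⟩
    exact hB F hF hFε
  have hmem : pcYZ P F₀ ∈ {u | ∃ F, IsChannel F ∧ pcXZ P F ≤ ε ∧ u = pcYZ P F} :=
    ⟨F₀, hF₀, hε, rfl⟩
  exact ⟨le_csSup ⟨B, hbound⟩ hmem, csSup_le ⟨_, hmem⟩ hbound⟩

lemma IsChannel.sum_sum_mul {F : V → V → ℝ} (hF : IsChannel F) (a : V → ℝ) :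
    ∑ z, ∑ y, a y * F y z = ∑ y, a y := by
  rw [Finset.sum_comm]
  simp only [← Finset.mul_sum, hF.2, mul_one]

lemma mul_sum_sub_pcXZ_le [Nonempty X] [Nonempty V] {P : X → V → ℝ} {g : V → X} {c : ℝ}
    (hc0 : 0 ≤ c) (hc : ∀ y y', c * confusionLoss P g y y' ≤ ∑ x, P x y)
    {F : V → V → ℝ} (hF : IsChannel F) :
    c * (∑ y, P (g y) y - pcXZ P F) ≤ ∑ y, ∑ x, P x y - pcYZ P F := by
  classical
  rw [← hF.sum_sum_mul fun y ↦ P (g y) y, ← hF.sum_sum_mul fun y ↦ ∑ x, P x y, pcXZ, pcYZ,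
    ← Finset.sum_sub_distrib, ← Finset.sum_sub_distrib, Finset.mul_sum]
  refine Finset.sum_le_sum fun z _ ↦ ?_
  obtain ⟨y', hy'⟩ := exists_eq_ciSup_of_finite (f := fun y ↦ (∑ x, P x y) * F y z)
  rw [← hy']
  calc c * (∑ y, P (g y) y * F y z - ⨆ x, ∑ y, P x y * F y z)
      ≤ c * (∑ y, P (g y) y * F y z - ∑ y, P (g y') y * F y z) := by
        gcongr
        exact Finite.le_ciSup (fun x ↦ ∑ y, P x y * F y z) (g y')
    _ = ∑ y, c * confusionLoss P g y y' * F y z := by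
        simp only [confusionLoss, ← Finset.sum_sub_distrib, Finset.mul_sum, mul_sub, sub_mul,
          mul_assoc]
    _ = ∑ y ∈ univ.erase y', c * confusionLoss P g y y' * F y z := by
        rw [← Finset.add_sum_erase univ _ (Finset.mem_univ y'), confusionLoss_self]
        ring
    _ ≤ ∑ y ∈ univ.erase y', (∑ x, P x y) * F y z :=
        Finset.sum_le_sum fun y _ ↦ mul_le_mul_of_nonneg_right (hc y y') (hF.1 y z)
    _ = ∑ y, (∑ x, P x y) * F y z - (∑ x, P x y') * F y' z := by
        rw [← Finset.add_sum_erase univ _ (Finset.mem_univ y'), add_sub_cancel_left]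

lemma pcYZ_le_of_pcXZ_le [Nonempty X] [Nonempty V] {P : X → V → ℝ} {g : V → X} {D κ ε : ℝ}
    (hκ0 : 0 ≤ κ) (hκ : ∀ y, κ ≤ ∑ x, P x y) (hD0 : 0 < D)
    (hD : ∀ y y', confusionLoss P g y y' ≤ D) {F : V → V → ℝ} (hF : IsChannel F)
    (hε : pcXZ P F ≤ ε) :
    pcYZ P F ≤ ∑ y, ∑ x, P x y - (∑ y, P (g y) y - ε) / D * κ := by
  have hrate (y y' : V) : κ / D * confusionLoss P g y y' ≤ ∑ x, P x y :=
    calc κ / D * confusionLoss P g y y' ≤ κ / D * D := by gcongr; exact hD y y'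
      _ = κ := div_mul_cancel₀ κ hD0.ne'
      _ ≤ ∑ x, P x y := hκ y
  have hexchange := mul_sum_sub_pcXZ_le (by positivity) hrate hF
  have hmono : κ / D * (∑ y, P (g y) y - ε) ≤ κ / D * (∑ y, P (g y) y - pcXZ P F) := by gcongr
  linarith [div_mul_comm (∑ y, P (g y) y - ε) D κ]

end Tradeoff

section ZChannel

variable {X V : Type*} [DecidableEq V] {y₀ z₀ : V} {ζ : ℝ}

lemma Zch_eq_add (h : y₀ ≠ z₀) (ζ : ℝ) (y z : V) :
    Zch y₀ z₀ ζ y z = (if y = z then 1 else 0) +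
      if y = y₀ then ζ * ((if z = z₀ then 1 else 0) - if z = y₀ then 1 else 0) else 0 := by
  unfold Zch
  split_ifs <;> grind

lemma Zch_self (h : y₀ ≠ z₀) (ζ : ℝ) (z : V) :
    Zch y₀ z₀ ζ z z = 1 - if z = y₀ then ζ else 0 := by
  unfold Zch
  split_ifs <;> grind

variable [Fintype X] [Fintype V]

lemma isChannel_Zch (h : y₀ ≠ z₀) (h0 : 0 ≤ ζ) (h1 : ζ ≤ 1) : IsChannel (Zch y₀ z₀ ζ) := by
  refine ⟨fun y z ↦ ?_, fun y ↦ ?_⟩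
  · unfold Zch
    split_ifs <;> linarith
  · simp only [Zch_eq_add h, Finset.sum_add_distrib]
    by_cases hy : y = y₀ <;> simp [hy, ← Finset.mul_sum]

lemma sum_mul_Zch (h : y₀ ≠ z₀) (ζ : ℝ) (f : V → ℝ) (z : V) :
    ∑ y, f y * Zch y₀ z₀ ζ y z =
      f z + ζ * f y₀ * ((if z = z₀ then 1 else 0) - if z = y₀ then 1 else 0) := by
  simp only [Zch_eq_add h, mul_add, Finset.sum_add_distrib, mul_ite, mul_zero, mul_one,
    Finset.sum_ite_eq', Finset.mem_univ, if_true]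
  ring

lemma pcXZ_Zch [Nonempty X] (h : y₀ ≠ z₀) (h1 : ζ ≤ 1) {P : X → V → ℝ} {g : V → X}
    (hg : IsMAPRule P g)
    (hz₀ : ∀ x, P x z₀ + ζ * P x y₀ ≤ P (g z₀) z₀ + ζ * P (g z₀) y₀) :
    pcXZ P (Zch y₀ z₀ ζ) = ∑ y, P (g y) y - ζ * confusionLoss P g y₀ z₀ := by
  have hguess (z : V) (x : X) :
      ∑ y, P x y * Zch y₀ z₀ ζ y z ≤ ∑ y, P (g z) y * Zch y₀ z₀ ζ y z := by
    simp only [sum_mul_Zch h]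
    rcases eq_or_ne z z₀ with rfl | hzz
    · simpa [h.symm] using hz₀ x
    · rcases eq_or_ne z y₀ with rfl | hzy
      · simp only [hzz, if_false, if_true]
        nlinarith [hg x z]
      · simpa [hzz, hzy] using hg x z
  rw [pcXZ, Finset.sum_congr rfl fun z _ ↦ ciSup_eq_of_forall_le_apply (hguess z)]
  simp only [sum_mul_Zch h, Finset.sum_add_distrib, mul_sub, Finset.sum_sub_distrib, mul_ite,
    mul_one, mul_zero, Finset.sum_ite_eq', Finset.mem_univ, if_true, confusionLoss]
  ring

lemma pcYZ_Zch [Nonempty V] (h : y₀ ≠ z₀) (h1 : ζ ≤ 1) {P : X → V → ℝ}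
    (hq : ∀ y, 0 ≤ ∑ x, P x y) (hz₀ : ζ * ∑ x, P x y₀ ≤ ∑ x, P x z₀) :
    pcYZ P (Zch y₀ z₀ ζ) = ∑ y, ∑ x, P x y - ζ * ∑ x, P x y₀ := by
  have hdiag (z y : V) :
      (∑ x, P x y) * Zch y₀ z₀ ζ y z ≤ (∑ x, P x z) * Zch y₀ z₀ ζ z z := by
    rcases eq_or_ne y z with rfl | hyz
    · rfl
    have hnonneg : 0 ≤ Zch y₀ z₀ ζ z z := by
      rw [Zch_self h]
      split_ifs <;> linarith
    by_cases hstep : y = y₀ ∧ z = z₀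
    · obtain ⟨rfl, rfl⟩ := hstep
      simpa [Zch, h.symm, mul_comm] using hz₀
    · have hoff : Zch y₀ z₀ ζ y z = 0 := by
        unfold Zch
        grind
      rw [hoff, mul_zero]
      exact mul_nonneg (hq z) hnonneg
  rw [pcYZ, Finset.sum_congr rfl fun z _ ↦ ciSup_eq_of_forall_le_apply (hdiag z)]
  simp only [Zch_self h, mul_sub, mul_one, mul_ite, mul_zero, Finset.sum_sub_distrib,
    Finset.sum_ite_eq', Finset.mem_univ, if_true]
  ring

lemma eventually_Zch [Nonempty X] [Nonempty V] (h : y₀ ≠ z₀) {P : X → V → ℝ} {g : V → X}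
    (hg : IsMAPRule P g) (hz₀ : ∀ x ≠ g z₀, P x z₀ < P (g z₀) z₀)
    (hq : ∀ y, 0 < ∑ x, P x y) :
    ∀ᶠ ζ in 𝓝[≥] 0, IsChannel (Zch y₀ z₀ ζ) ∧
      pcXZ P (Zch y₀ z₀ ζ) = ∑ y, P (g y) y - ζ * confusionLoss P g y₀ z₀ ∧
      pcYZ P (Zch y₀ z₀ ζ) = ∑ y, ∑ x, P x y - ζ * ∑ x, P x y₀ := by
  filter_upwards [self_mem_nhdsWithin, nhdsWithin_le_nhds (eventually_le_nhds one_pos),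
    nhdsWithin_le_nhds (eventually_mul_le _ (hq z₀)),
    nhdsWithin_le_nhds (eventually_forall_add_mul_le hz₀ (P · y₀))] with ζ h0 h1 hζq hζP
  exact ⟨isChannel_Zch h h0 h1, pcXZ_Zch h h1 hg hζP, pcYZ_Zch h h1 (fun y ↦ (hq y).le) hζq⟩

theorem eventually_optimalUtility_mem_Icc [Nonempty X] [Nonempty V] {P : X → V → ℝ} {g : V → X}
    {κ : ℝ} (hg : IsMAPRule P g) (hz₀ : ∀ x ≠ g z₀, P x z₀ < P (g z₀) z₀)
    (hP : ∑ y, ∑ x, P x y = 1) (hκ0 : 0 < κ) (hκ : ∀ y, κ ≤ ∑ x, P x y)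
    (hD0 : 0 < confusionLoss P g y₀ z₀)
    (hD : ∀ y y', confusionLoss P g y y' ≤ confusionLoss P g y₀ z₀) :
    ∀ᶠ ε in 𝓝[≤] (∑ y, P (g y) y),
      let ζ := (∑ y, P (g y) y - ε) / confusionLoss P g y₀ z₀
      (1 - ζ * ∑ x, P x y₀ ≤ optimalUtility P ε ∧ optimalUtility P ε ≤ 1 - ζ * κ) ∧
        IsChannel (Zch y₀ z₀ ζ) ∧ pcXZ P (Zch y₀ z₀ ζ) ≤ ε ∧
        pcYZ P (Zch y₀ z₀ ζ) = 1 - ζ * ∑ x, P x y₀ := by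
  set T := ∑ y, P (g y) y
  have h : y₀ ≠ z₀ := by
    rintro rfl
    exact hD0.ne' (confusionLoss_self P g y₀)
  have hζ : Filter.Tendsto (fun ε ↦ (T - ε) / confusionLoss P g y₀ z₀) (𝓝[≤] T) (𝓝[≥] 0) := by
    refine tendsto_nhdsWithin_iff.2 ⟨?_, ?_⟩
    · exact (Continuous.tendsto' (by fun_prop) _ _ (by simp)).mono_left nhdsWithin_le_nhds
    · filter_upwards [self_mem_nhdsWithin] with ε hε
      exact div_nonneg (sub_nonneg.2 hε) hD0.le
  filter_upwards [hζ.eventually (eventually_Zch h hg hz₀ fun y ↦ hκ0.trans_le (hκ y))] with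
    ε ⟨hZ, hZX, hZY⟩
  rw [div_mul_cancel₀ _ hD0.ne', sub_sub_cancel] at hZX
  rw [hP] at hZY
  have hS := pcYZ_le_optimalUtility_le hZ hZX.le fun F hF hFε ↦
    hP ▸ pcYZ_le_of_pcXZ_le hκ0.le hκ hD0 hD hF hFε
  exact ⟨hZY ▸ hS, hZ, hZX.le, hZY⟩

end ZChannel

section BernoulliWeights

lemma bern_mem_uIcc (p : ℝ) (b : Bool) : bern p b ∈ Set.uIcc p (1 - p) := by
  cases b <;> simp [bern]

lemma bern_mem_Icc_of_le_half {p : ℝ} (hp : p ≤ 1 / 2) (b : Bool) :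
    bern p b ∈ Set.Icc p (1 - p) :=
  Set.uIcc_of_le (show p ≤ 1 - p by linarith) ▸ bern_mem_uIcc p b

lemma bern_mem_Icc_of_half_le {p : ℝ} (hp : 1 / 2 ≤ p) (b : Bool) :
    bern p b ∈ Set.Icc (1 - p) p :=
  Set.uIcc_of_ge (show 1 - p ≤ p by linarith) ▸ bern_mem_uIcc p b

lemma bern_nonneg {p : ℝ} (hp : p ∈ Set.Icc 0 1) (b : Bool) : 0 ≤ bern p b := by
  cases b <;> simp [bern, hp.1, hp.2]

lemma sum_bern (p : ℝ) : ∑ b, bern p b = 1 := by simp [bern]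

lemma sum_bern_xor (p : ℝ) (a : Bool) : ∑ b, bern p (xor a b) = 1 := by
  cases a <;> simp [bern]

lemma bern_mul_lt_bern_mul {p α : ℝ} (hp : 1 / 2 ≤ p) (hα : α ∈ Set.Icc (0 : ℝ) 1)
    (hnt : α * p < (1 - α) * (1 - p)) (a b : Bool) :
    bern p a * α < bern p b * (1 - α) :=
  calc bern p a * α ≤ p * α :=
        mul_le_mul_of_nonneg_right (bern_mem_Icc_of_half_le hp a).2 hα.1
    _ < (1 - p) * (1 - α) := by linarith
    _ ≤ bern p b * (1 - α) :=
        mul_le_mul_of_nonneg_right (bern_mem_Icc_of_half_le hp b).1 (sub_nonneg.2 hα.2)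

end BernoulliWeights

section MarkovChain

variable {N : ℕ}

/-- The weight of the path `x` of the binary symmetric Markov chain with flip probability `r` and
initial weights `f`. -/
noncomputable def chainWeight (f : Bool → ℝ) (r : ℝ) (x : Fin (N + 1) → Bool) : ℝ :=
  f (x 0) * ∏ i : Fin N, bern r (xor (x i.succ) (x i.castSucc))

lemma chainWeight_nonneg {f : Bool → ℝ} (hf : ∀ b, 0 ≤ f b) {r : ℝ} (hr : r ∈ Set.Icc 0 1)
    (x : Fin (N + 1) → Bool) : 0 ≤ chainWeight f r x :=
  mul_nonneg (hf _) (Finset.prod_nonneg fun _ _ ↦ bern_nonneg hr _)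

lemma chainWeight_const (f : Bool → ℝ) (r : ℝ) (b : Bool) :
    chainWeight f r (fun _ : Fin (N + 1) ↦ b) = f b * (1 - r) ^ N := by
  simp [chainWeight, bern]

lemma chainWeight_cons (f : Bool → ℝ) (r : ℝ) (a : Bool) (x : Fin (N + 1) → Bool) :
    chainWeight f r (Fin.cons a x : Fin (N + 2) → Bool) =
      f a * chainWeight (fun b ↦ bern r (xor a b)) r x := by
  simp [chainWeight, Fin.prod_univ_succ, Bool.xor_comm]

lemma sum_chainWeight (f : Bool → ℝ) (r : ℝ) :
    ∑ x : Fin (N + 1) → Bool, chainWeight f r x = ∑ b, f b := by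
  induction N generalizing f with
  | zero =>
    rw [← (Equiv.funUnique (Fin 1) Bool).symm.sum_comp]
    simp [chainWeight]
  | succ N ih =>
    rw [← (Fin.consEquiv fun _ : Fin (N + 2) ↦ Bool).sum_comp, Fintype.sum_prod_type]
    simp only [Fin.consEquiv, Equiv.coe_fn_mk, chainWeight_cons, ← Finset.mul_sum, ih, sum_bern_xor,
      mul_one]

lemma exists_succ_ne_castSucc {β : Type*} (x : Fin (N + 1) → β) (h : ∀ b, x ≠ fun _ ↦ b) :
    ∃ i : Fin N, x i.succ ≠ x i.castSucc := by
  by_contra! hx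
  refine h (x 0) (funext fun k ↦ ?_)
  induction k using Fin.induction with
  | zero => rfl
  | succ i ih => rw [hx, ih]

lemma pos_of_forall_ne_const {β : Type*} (x : Fin (N + 1) → β) (h : ∀ b, x ≠ fun _ ↦ b) :
    0 < N :=
  let ⟨i, _⟩ := exists_succ_ne_castSucc x h
  i.pos

lemma chainWeight_le_of_ne_const {f : Bool → ℝ} {c : ℝ} (hc : 0 ≤ c) (hf : ∀ b, f b ≤ c) {r : ℝ}
    (hr0 : 0 ≤ r) (hr : r ≤ 1 / 2) {x : Fin (N + 1) → Bool} (hx : ∀ b, x ≠ fun _ ↦ b) :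
    chainWeight f r x ≤ c * (r * (1 - r) ^ (N - 1)) := by
  have hstep (j : Fin N) : 0 ≤ bern r (xor (x j.succ) (x j.castSucc)) :=
    bern_nonneg ⟨hr0, by linarith⟩ _
  obtain ⟨i, hi⟩ := exists_succ_ne_castSucc x hx
  have hflip : bern r (xor (x i.succ) (x i.castSucc)) = r := by simp [bern, hi]
  refine mul_le_mul (hf _) ?_ (Finset.prod_nonneg fun j _ ↦ hstep j) hc
  rw [← Finset.mul_prod_erase univ _ (Finset.mem_univ i), hflip]
  gcongr
  calc ∏ j ∈ univ.erase i, bern r (xor (x j.succ) (x j.castSucc))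
      ≤ ∏ _j ∈ univ.erase i, (1 - r) :=
        Finset.prod_le_prod (fun j _ ↦ hstep j) fun _ _ ↦ (bern_mem_Icc_of_le_half hr _).2
    _ = (1 - r) ^ (N - 1) := by simp

end MarkovChain

section SymmetricChannel

variable {ι : Type*} [Fintype ι]

/-- The probability that the memoryless binary symmetric channel with crossover probability `α`
sends the word `x` to the word `y`. -/
noncomputable def bscWeight (α : ℝ) (x y : ι → Bool) : ℝ :=
  ∏ k, bern α (xor (x k) (y k))

lemma sum_bscWeight [DecidableEq ι] (α : ℝ) (x : ι → Bool) : ∑ y, bscWeight α x y = 1 := by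
  simp only [bscWeight, ← Fintype.prod_sum fun k b ↦ bern α (xor (x k) b), sum_bern_xor,
    Finset.prod_const_one]

lemma bscWeight_mem_Icc {α : ℝ} (hα0 : 0 ≤ α) (hα : α ≤ 1 / 2) (x y : ι → Bool) :
    bscWeight α x y ∈ Set.Icc (α ^ Fintype.card ι) ((1 - α) ^ Fintype.card ι) := by
  have hbern (k : ι) := bern_mem_Icc_of_le_half hα (xor (x k) (y k))
  rw [← Finset.card_univ, ← Finset.prod_const, ← Finset.prod_const]
  exact ⟨Finset.prod_le_prod (fun _ _ ↦ hα0) fun k _ ↦ (hbern k).1,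
    Finset.prod_le_prod (fun k _ ↦ hα0.trans (hbern k).1) fun k _ ↦ (hbern k).2⟩

lemma hammingDist_not_add_hammingDist (x y : ι → Bool) :
    hammingDist (fun k ↦ !x k) y + hammingDist x y = Fintype.card ι := by
  have hne (k : ι) : (!x k) ≠ y k ↔ ¬x k ≠ y k := by cases x k <;> cases y k <;> simp
  simp only [hammingDist, hne]
  rw [add_comm, Finset.card_filter_add_card_filter_not, Finset.card_univ]

lemma bscWeight_eq_pow (α : ℝ) (x y : ι → Bool) :
    bscWeight α x y =
      α ^ hammingDist x y * (1 - α) ^ (Fintype.card ι - hammingDist x y) := by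
  have hbern (k : ι) : bern α (xor (x k) (y k)) = if x k ≠ y k then α else 1 - α := by
    cases x k <;> cases y k <;> simp [bern]
  have hagree : #{k | ¬x k ≠ y k} = Fintype.card ι - hammingDist x y :=
    Nat.eq_sub_of_add_eq' <| by
      rw [hammingDist, Finset.card_filter_add_card_filter_not, Finset.card_univ]
  simp only [bscWeight, hbern, Finset.prod_ite, Finset.prod_const, hagree, hammingDist]

lemma sum_apply_hammingDist [DecidableEq ι] {M : Type*} [AddCommMonoid M] (f : ℕ → M)
    (x : ι → Bool) :
    ∑ y, f (hammingDist x y) =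
      ∑ k ∈ Finset.range (Fintype.card ι + 1), (Fintype.card ι).choose k • f k := by
  let e : (ι → Bool) ≃ Finset ι :=
    { toFun := fun y ↦ {k | x k ≠ y k}
      invFun := fun s k ↦ xor (x k) (decide (k ∈ s))
      left_inv := fun y ↦ by ext k; cases hx : x k <;> cases hy : y k <;> simp [hx, hy]
      right_inv := fun s ↦ by ext k; cases hx : x k <;> simp [hx] }
  calc ∑ y, f (hammingDist x y) = ∑ s : Finset ι, f #s := e.sum_comp fun s ↦ f #s
    _ = _ := by rw [← Finset.powerset_univ, Finset.sum_powerset_apply_card, Finset.card_univ]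

end SymmetricChannel

section Majority

variable {m : ℕ}

/-- The majority bit of a word of odd length. -/
def majority (y : Fin (2 * m + 1) → Bool) : Bool :=
  decide (m < hammingDist (fun _ ↦ false) y)

lemma hammingDist_const_not (b : Bool) (y : Fin (2 * m + 1) → Bool) :
    hammingDist (fun _ ↦ !b) y + hammingDist (fun _ ↦ b) y = 2 * m + 1 := by
  simpa using hammingDist_not_add_hammingDist (fun _ ↦ b) y

lemma majority_eq_iff {b : Bool} {y : Fin (2 * m + 1) → Bool} :
    majority y = b ↔ hammingDist (fun _ ↦ b) y ≤ m := by
  have h := hammingDist_const_not false y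
  cases b <;>
    simp only [majority, decide_eq_true_eq, decide_eq_false_iff_not, Bool.not_false] at h ⊢ <;>
    omega

lemma hammingDist_majority_le (y : Fin (2 * m + 1) → Bool) :
    hammingDist (fun _ ↦ majority y) y ≤ m :=
  majority_eq_iff.1 rfl

lemma majority_const (b : Bool) : majority (fun _ : Fin (2 * m + 1) ↦ b) = b := by
  simp [majority_eq_iff]

lemma sum_apply_majority {M : Type*} [AddCommMonoid M] (f : Bool → ℕ → M) :
    ∑ y : Fin (2 * m + 1) → Bool, f (majority y) (hammingDist (fun _ ↦ majority y) y) =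
      ∑ b, ∑ k ∈ Finset.range (m + 1), (2 * m + 1).choose k • f b k := by
  have hsplit (y : Fin (2 * m + 1) → Bool) :
      f (majority y) (hammingDist (fun _ ↦ majority y) y) =
        ∑ b, if hammingDist (fun _ ↦ b) y ≤ m then f b (hammingDist (fun _ ↦ b) y) else 0 := by
    simp only [← majority_eq_iff, Finset.sum_ite_eq, Finset.mem_univ, if_true]
  simp only [hsplit]
  rw [Finset.sum_comm]
  refine Finset.sum_congr rfl fun b _ ↦ ?_
  rw [sum_apply_hammingDist (fun k ↦ if k ≤ m then f b k else 0), Fintype.card_fin]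
  simp only [smul_ite, smul_zero, ← Finset.sum_filter]
  congr 1
  grind

end Majority

section NoisyMarkovSource

variable {m : ℕ} {p r α : ℝ}

lemma jointMarkov_eq_mul (m : ℕ) (p r α : ℝ) (x y : Fin (2 * m + 1) → Bool) :
    jointMarkov m p r α x y = chainWeight (bern p) r x * bscWeight α x y :=
  rfl

lemma jointMarkov_const (m : ℕ) (p r α : ℝ) (b : Bool) (y : Fin (2 * m + 1) → Bool) :
    jointMarkov m p r α (fun _ ↦ b) y =
      bern p b * (1 - r) ^ (2 * m) * bscWeight α (fun _ ↦ b) y := by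
  rw [jointMarkov_eq_mul, chainWeight_const]

lemma jointMarkov_const_eq_pow (m : ℕ) (p r α : ℝ) (b : Bool) (y : Fin (2 * m + 1) → Bool) :
    jointMarkov m p r α (fun _ ↦ b) y = bern p b * (1 - r) ^ (2 * m) *
      (α ^ hammingDist (fun _ ↦ b) y * (1 - α) ^ (2 * m + 1 - hammingDist (fun _ ↦ b) y)) := by
  rw [jointMarkov_const, bscWeight_eq_pow, Fintype.card_fin]

lemma sum_jointMarkov (m : ℕ) (p r α : ℝ) : ∑ y, ∑ x, jointMarkov m p r α x y = 1 := by
  rw [Finset.sum_comm]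
  simp only [jointMarkov_eq_mul, ← Finset.mul_sum, sum_bscWeight, mul_one, sum_chainWeight,
    sum_bern]

lemma pow_le_sum_jointMarkov (hp : p ∈ Set.Icc 0 1) (hr : r ∈ Set.Icc 0 1) (hα0 : 0 ≤ α)
    (hα : α ≤ 1 / 2) (y : Fin (2 * m + 1) → Bool) :
    α ^ (2 * m + 1) ≤ ∑ x, jointMarkov m p r α x y :=
  calc α ^ (2 * m + 1)
      = ∑ x : Fin (2 * m + 1) → Bool, chainWeight (bern p) r x * α ^ (2 * m + 1) := by
        rw [← Finset.sum_mul, sum_chainWeight, sum_bern, one_mul]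
    _ ≤ ∑ x, jointMarkov m p r α x y := by
        simp only [jointMarkov_eq_mul]
        refine Finset.sum_le_sum fun x _ ↦ mul_le_mul_of_nonneg_left ?_
          (chainWeight_nonneg (bern_nonneg hp) hr x)
        simpa only [Fintype.card_fin] using (bscWeight_mem_Icc hα0 hα x y).1

lemma jointMarkov_const_lt_majority (hp : 1 / 2 ≤ p) (hα : α ∈ Set.Ioo (0 : ℝ) (1 / 2))
    (hr1 : r < 1) (hnt : α * p < (1 - α) * (1 - p)) {b : Bool} {y : Fin (2 * m + 1) → Bool}
    (hb : b ≠ majority y) :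
    jointMarkov m p r α (fun _ ↦ b) y < jointMarkov m p r α (fun _ ↦ majority y) y := by
  obtain rfl := Bool.eq_not.2 hb
  rw [jointMarkov_const_eq_pow, jointMarkov_const_eq_pow]
  have hd := hammingDist_majority_le y
  have hd_not := hammingDist_const_not (majority y) y
  set a := majority y
  set d := hammingDist (fun _ ↦ a) y
  obtain ⟨j, hj⟩ := Nat.exists_eq_add_of_le hd
  have hfar : hammingDist (fun _ ↦ !a) y = d + 1 + 2 * j := by omega
  have hnear_compl : 2 * m + 1 - d = d + 1 + 2 * j := by omega
  have hfar_compl : 2 * m + 1 - (d + 1 + 2 * j) = d := by omega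
  rw [hfar, hnear_compl, hfar_compl]
  obtain ⟨hα0, hα1⟩ := hα
  have hr' : 0 < 1 - r := by linarith
  have hα' : 0 < 1 - α := by linarith
  have hbit (b : Bool) : bern p b * α < bern p a * (1 - α) :=
    bern_mul_lt_bern_mul hp ⟨hα0.le, by linarith⟩ hnt b a
  have hbit_pos : 0 < bern p a * (1 - α) :=
    (show 0 ≤ p * α by positivity).trans_lt (hbit true)
  have hpow : α ^ (2 * j) ≤ (1 - α) ^ (2 * j) := pow_le_pow_left₀ hα0.le (by linarith [hα1]) _
  calc _ = (1 - r) ^ (2 * m) * (α ^ d * (1 - α) ^ d) * (bern p (!a) * α * α ^ (2 * j)) := by ring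
    _ < (1 - r) ^ (2 * m) * (α ^ d * (1 - α) ^ d) *
        (bern p a * (1 - α) * (1 - α) ^ (2 * j)) :=
      mul_lt_mul_of_pos_left (mul_lt_mul (hbit _) hpow (by positivity) hbit_pos.le)
        (mul_pos (pow_pos hr' _) (by positivity))
    _ = _ := by ring

lemma le_jointMarkov_majority (hm : 1 ≤ m) (hp : 1 / 2 ≤ p) (hα : α ∈ Set.Ioo (0 : ℝ) (1 / 2))
    (hr1 : r ≤ 1) (hnt : α * p < (1 - α) * (1 - p)) (y : Fin (2 * m + 1) → Bool) :
    p * (1 - r) ^ (2 * m) * (α ^ (2 * m) * (1 - α)) ≤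
      jointMarkov m p r α (fun _ ↦ majority y) y := by
  rw [jointMarkov_const_eq_pow]
  have hd := hammingDist_majority_le y
  set b := majority y
  set d := hammingDist (fun _ ↦ b) y
  obtain ⟨j, hj⟩ : ∃ j, 2 * m = d + j + 1 := ⟨2 * m - 1 - d, by omega⟩
  have hcompl : d + j + 1 + 1 - d = j + 2 := by omega
  obtain ⟨hα0, hα1⟩ := hα
  have hr' : 0 ≤ 1 - r := by linarith
  have hα' : 0 < 1 - α := by linarith
  have hbit : p * α < bern p b * (1 - α) :=
    bern_mul_lt_bern_mul hp ⟨hα0.le, by linarith⟩ hnt true b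
  have hpow : α ^ j ≤ (1 - α) ^ j := pow_le_pow_left₀ hα0.le (by linarith [hα1]) _
  have hbit_pos : 0 < bern p b * (1 - α) := lt_of_le_of_lt (by positivity) hbit
  rw [hj, hcompl]
  calc p * (1 - r) ^ (d + j + 1) * (α ^ (d + j + 1) * (1 - α))
      = (1 - r) ^ (d + j + 1) * (α ^ d * (1 - α)) * (p * α * α ^ j) := by ring
    _ ≤ (1 - r) ^ (d + j + 1) * (α ^ d * (1 - α)) * (bern p b * (1 - α) * (1 - α) ^ j) := by
        refine mul_le_mul_of_nonneg_left ?_ (mul_nonneg (pow_nonneg hr' _) (by positivity))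
        exact mul_le_mul hbit.le hpow (by positivity) hbit_pos.le
    _ = _ := by ring

lemma le_half_of_div_lt_pow (hα : α ∈ Set.Icc (0 : ℝ) (1 / 2)) (hr1 : r < 1) {k : ℕ}
    (hrα : r / (1 - r) < (α / (1 - α)) ^ k) : r ≤ 1 / 2 := by
  have hα' : 0 < 1 - α := by linarith [hα.2]
  have hratio : (α / (1 - α)) ^ k ≤ 1 :=
    pow_le_one₀ (div_nonneg hα.1 hα'.le) ((div_le_one hα').2 (by linarith [hα.2]))
  have := (div_lt_one (sub_pos.2 hr1)).1 (hrα.trans_le hratio)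
  linarith

lemma jointMarkov_lt_of_ne_const (hp : 1 / 2 ≤ p) (hα : α ∈ Set.Icc (0 : ℝ) (1 / 2))
    (hr0 : 0 ≤ r) (hr1 : r < 1) (hrα : r / (1 - r) < (α / (1 - α)) ^ (2 * m))
    {x : Fin (2 * m + 1) → Bool} (hx : ∀ b, x ≠ fun _ ↦ b) (y : Fin (2 * m + 1) → Bool) :
    jointMarkov m p r α x y < p * (1 - r) ^ (2 * m) * (α ^ (2 * m) * (1 - α)) := by
  have hr : r ≤ 1 / 2 := le_half_of_div_lt_pow hα hr1 hrα
  obtain ⟨hα0, hα1⟩ := hα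
  have hp0 : 0 < p := by linarith
  have hr' : 0 < 1 - r := by linarith
  have hα' : 0 < 1 - α := by linarith
  have hflip : r * (1 - α) ^ (2 * m) < α ^ (2 * m) * (1 - r) := by
    rwa [div_pow, div_lt_div_iff₀ hr' (by positivity)] at hrα
  have hchain : chainWeight (bern p) r x ≤ p * (r * (1 - r) ^ (2 * m - 1)) :=
    chainWeight_le_of_ne_const hp0.le (fun b ↦ (bern_mem_Icc_of_half_le hp b).2) hr0 hr hx
  have hbsc := bscWeight_mem_Icc hα0 hα1 x y
  rw [Fintype.card_fin] at hbsc
  calc jointMarkov m p r α x y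
      ≤ p * (r * (1 - r) ^ (2 * m - 1)) * (1 - α) ^ (2 * m + 1) :=
        mul_le_mul hchain hbsc.2 ((pow_nonneg hα0 _).trans hbsc.1) (by positivity)
    _ = p * (1 - r) ^ (2 * m - 1) * (1 - α) * (r * (1 - α) ^ (2 * m)) := by ring
    _ < p * (1 - r) ^ (2 * m - 1) * (1 - α) * (α ^ (2 * m) * (1 - r)) :=
        mul_lt_mul_of_pos_left hflip (by positivity)
    _ = p * (1 - r) ^ (2 * m) * (α ^ (2 * m) * (1 - α)) := by
        rw [← Nat.sub_add_cancel (pos_of_forall_ne_const x hx), pow_succ (1 - r)]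
        simp only [Nat.add_sub_cancel]
        ring

lemma jointMarkov_lt_majority (hp : 1 / 2 ≤ p) (hα : α ∈ Set.Ioo (0 : ℝ) (1 / 2))
    (hr0 : 0 ≤ r) (hr1 : r < 1) (hnt : α * p < (1 - α) * (1 - p))
    (hrα : r / (1 - r) < (α / (1 - α)) ^ (2 * m)) {x y : Fin (2 * m + 1) → Bool}
    (hx : x ≠ fun _ ↦ majority y) :
    jointMarkov m p r α x y < jointMarkov m p r α (fun _ ↦ majority y) y := by
  by_cases hconst : ∃ b, x = fun _ ↦ b
  · obtain ⟨b, rfl⟩ := hconst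
    exact jointMarkov_const_lt_majority hp hα hr1 hnt fun h ↦ hx (h ▸ rfl)
  · have hx' : ∀ b, x ≠ fun _ ↦ b := not_exists.1 hconst
    have hm : 1 ≤ m := by have := pos_of_forall_ne_const x hx'; omega
    exact (jointMarkov_lt_of_ne_const hp ⟨hα.1.le, hα.2.le⟩ hr0 hr1 hrα hx' y).trans_le
      (le_jointMarkov_majority hm hp hα hr1.le hnt y)

lemma sum_jointMarkov_majority (m : ℕ) (p r : ℝ) (hα : α ≠ 1) :
    ∑ y, jointMarkov m p r α (fun _ ↦ majority y) y =
      (1 - α) ^ (2 * m + 1) * (1 - r) ^ (2 * m) *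
        ∑ k ∈ Finset.range (m + 1), (Nat.choose (2 * m + 1) k : ℝ) * (α / (1 - α)) ^ k := by
  simp only [jointMarkov_const_eq_pow]
  rw [sum_apply_majority fun b k ↦
    bern p b * (1 - r) ^ (2 * m) * (α ^ k * (1 - α) ^ (2 * m + 1 - k)), Finset.sum_comm,
    Finset.mul_sum]
  refine Finset.sum_congr rfl fun k hk ↦ ?_
  have hk' : k ≤ 2 * m + 1 := by have := Finset.mem_range.1 hk; omega
  rw [← Finset.smul_sum, ← Finset.sum_mul, ← Finset.sum_mul, sum_bern, nsmul_eq_mul, div_pow,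
    pow_sub₀ _ (sub_ne_zero.2 hα.symm) hk']
  ring

lemma confusionLoss_majority_true_false (m : ℕ) (p r α : ℝ) :
    confusionLoss (jointMarkov m p r α) (fun y _ ↦ majority y) (fun _ ↦ true) (fun _ ↦ false) =
      (1 - r) ^ (2 * m) * (p * (1 - α) ^ (2 * m + 1) - (1 - p) * α ^ (2 * m + 1)) := by
  simp only [confusionLoss, majority_const, jointMarkov_const, bscWeight, bern, Bool.xor_self,
    Bool.xor_true, Bool.not_false, Bool.false_eq_true, if_true, if_false, Finset.prod_const,
    Finset.card_univ, Fintype.card_fin]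
  ring

lemma mul_confusionLoss_majority_true_false (m : ℕ) (p r α : ℝ) :
    (1 - r) * confusionLoss (jointMarkov m p r α) (fun y _ ↦ majority y)
        (fun _ ↦ true) (fun _ ↦ false) =
      p * ((1 - α) * (1 - r)) ^ (2 * m + 1) - (1 - p) * (α * (1 - r)) ^ (2 * m + 1) := by
  rw [confusionLoss_majority_true_false, mul_pow, mul_pow]
  ring

lemma confusionLoss_majority_le (hp : p ∈ Set.Icc (1 / 2 : ℝ) 1) (hα : α ∈ Set.Icc (0 : ℝ) (1 / 2))
    (hr1 : r ≤ 1) (y y' : Fin (2 * m + 1) → Bool) :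
    confusionLoss (jointMarkov m p r α) (fun y _ ↦ majority y) y y' ≤
      confusionLoss (jointMarkov m p r α) (fun y _ ↦ majority y)
        (fun _ ↦ true) (fun _ ↦ false) := by
  have hr' : 0 ≤ 1 - r := by linarith
  have hbern (b : Bool) := bern_mem_Icc_of_half_le hp.1 b
  have hbsc (b : Bool) := bscWeight_mem_Icc hα.1 hα.2 (fun _ ↦ b) y
  simp only [Fintype.card_fin] at hbsc
  have hα' : 0 ≤ α ^ (2 * m + 1) := pow_nonneg hα.1 _
  have hupper (b : Bool) :
      bern p b * bscWeight α (fun _ ↦ b) y ≤ p * (1 - α) ^ (2 * m + 1) :=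
    mul_le_mul (hbern b).2 (hbsc b).2 (hα'.trans (hbsc b).1) (by linarith [hp.1])
  have hlower (b : Bool) :
      (1 - p) * α ^ (2 * m + 1) ≤ bern p b * bscWeight α (fun _ ↦ b) y :=
    mul_le_mul (hbern b).1 (hbsc b).1 hα' (by linarith [hp.2, (hbern b).1])
  rw [confusionLoss_majority_true_false]
  calc confusionLoss (jointMarkov m p r α) (fun y _ ↦ majority y) y y'
      = (1 - r) ^ (2 * m) * (bern p (majority y) * bscWeight α (fun _ ↦ majority y) y -
          bern p (majority y') * bscWeight α (fun _ ↦ majority y') y) := by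
        simp only [confusionLoss, jointMarkov_const]
        ring
    _ ≤ _ := mul_le_mul_of_nonneg_left (sub_le_sub (hupper _) (hlower _)) (pow_nonneg hr' _)

end NoisyMarkovSource

/-- Theorem 5: Markov private data, odd `n = 2m+1`. The value
`P_c(X^n|Y^n)` equals `T = (1−α)^n (1−r)^{n−1} Σ_{k=0}^{(n−1)/2} C(n,k)(α/(1−α))^k`,
and in the high-utility regime the optimal tradeoff `S(ε)` is squeezed between
`1 − ζ(ε)·Pr(Y^n = 1)` and `1 − ζ(ε)·α^n`, with the lower bound attained by the
`2^n`-ary Z-channel `Z_n(ζ(ε))`. -/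
theorem markov_vector_high_utility (m : ℕ) (p r α : ℝ)
    (hp : p ∈ Set.Ico (1 / 2 : ℝ) 1) (hα : α ∈ Set.Ioo (0 : ℝ) (1 / 2))
    (hr0 : 0 ≤ r) (hr1 : r < 1)
    (hnt : α * p < (1 - α) * (1 - p))
    (hrα : r / (1 - r) < (α / (1 - α)) ^ (2 * m)) :
    (∑ y, ⨆ x, jointMarkov m p r α x y) =
      (1 - α) ^ (2 * m + 1) * (1 - r) ^ (2 * m) *
        ∑ k ∈ Finset.range (m + 1),
          (Nat.choose (2 * m + 1) k : ℝ) * (α / (1 - α)) ^ k ∧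
    (let T : ℝ := (1 - α) ^ (2 * m + 1) * (1 - r) ^ (2 * m) *
        ∑ k ∈ Finset.range (m + 1),
          (Nat.choose (2 * m + 1) k : ℝ) * (α / (1 - α)) ^ k
     ∃ εL < T, ∀ ε ∈ Set.Icc εL T,
      let ζ : ℝ := (1 - r) * (T - ε) /
        (p * ((1 - α) * (1 - r)) ^ (2 * m + 1) -
          (1 - p) * (α * (1 - r)) ^ (2 * m + 1))
      let S : ℝ := sSup {u | ∃ F : (Fin (2 * m + 1) → Bool) → (Fin (2 * m + 1) → Bool) → ℝ,
        IsChannel F ∧ pcXZ (jointMarkov m p r α) F ≤ ε ∧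
        u = pcYZ (jointMarkov m p r α) F}
      let Z := Zch (fun _ : Fin (2 * m + 1) => true) (fun _ : Fin (2 * m + 1) => false) ζ
      (1 - ζ * ∑ x, jointMarkov m p r α x (fun _ => true) ≤ S ∧
        S ≤ 1 - ζ * α ^ (2 * m + 1)) ∧
      (IsChannel Z ∧ pcXZ (jointMarkov m p r α) Z ≤ ε ∧
        pcYZ (jointMarkov m p r α) Z =
          1 - ζ * ∑ x, jointMarkov m p r α x (fun _ => true))) := by
  have hlt {x y} := jointMarkov_lt_majority hp.1 hα hr0 hr1 hnt hrα (x := x) (y := y)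
  have hg : IsMAPRule (jointMarkov m p r α) fun y _ ↦ majority y := fun x y ↦ by
    rcases eq_or_ne x fun _ ↦ majority y with rfl | hx
    exacts [le_rfl, (hlt hx).le]
  have hT := sum_jointMarkov_majority m p r (show α ≠ 1 by linarith [hα.2])
  have hmarginal := pow_le_sum_jointMarkov (m := m) ⟨by linarith [hp.1], hp.2.le⟩ ⟨hr0, hr1.le⟩
    hα.1.le hα.2.le
  have hloss_max := confusionLoss_majority_le (m := m) ⟨hp.1, hp.2.le⟩ ⟨hα.1.le, hα.2.le⟩ hr1.le
  have hloss_pos : 0 < confusionLoss (jointMarkov m p r α) (fun y _ ↦ majority y)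
      (fun _ ↦ true) (fun _ ↦ false) :=
    sub_pos.2 (hlt fun h ↦ by simpa [majority_const] using congrFun h 0)
  obtain ⟨εL, hεL, htradeoff⟩ := mem_nhdsLE_iff_exists_Icc_subset.1 <|
    eventually_optimalUtility_mem_Icc hg (fun _ ↦ hlt) (sum_jointMarkov m p r α)
      (pow_pos hα.1 _) hmarginal hloss_pos hloss_max
  rw [hT] at hεL htradeoff
  refine ⟨hg.sum_iSup.trans hT, εL, hεL, fun ε hε ↦ ?_⟩
  rw [← mul_confusionLoss_majority_true_false, mul_div_mul_left _ _ (sub_pos.2 hr1).ne']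
  exact htradeoff hε
end

section
/- Let U and V be real-valued random variables on a common probability space, neither of which is almost surely constant, and let ε ∈ [0, 1]. Then mmse(f(U)|V) ≥ (1−ε)·Var(f(U)) for every Borel function f : ℝ → ℝ with 0 < Var(f(U)) < ∞ if and only if ρ_m(U,V)² ≤ ε. -/
open MeasureTheory ProbabilityTheory

variable {Ω : Type*} [MeasurableSpace Ω]

/-- `mmse(W|V) = E[(W − E[W|V])²]`: the minimum mean squared error of estimating `W`
from `V` (conditional expectation taken w.r.t. the σ-algebra generated by `V`). -/
noncomputable def mmse (μ : Measure Ω) (W V : Ω → ℝ) : ℝ :=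
  ∫ ω, (W ω - (μ[W | MeasurableSpace.comap V Real.measurableSpace]) ω) ^ 2 ∂μ

/-- The Pearson correlation coefficient `ρ(U,V)`. -/
noncomputable def corr (μ : Measure Ω) (U V : Ω → ℝ) : ℝ :=
  (∫ ω, (U ω - ∫ x, U x ∂μ) * (V ω - ∫ x, V x ∂μ) ∂μ) /
    (Real.sqrt (variance U μ) * Real.sqrt (variance V μ))

/-- `f ∈ S_U`: `f` is Borel measurable and `0 < Var(f(U)) < ∞`. -/
def MemS (μ : Measure Ω) (U : Ω → ℝ) (f : ℝ → ℝ) : Prop :=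
  Measurable f ∧ 0 < evariance (f ∘ U) μ ∧ evariance (f ∘ U) μ < ⊤

/-- The Hirschfeld–Gebelein–Rényi maximal correlation
`ρ_m(U,V) = sup{ρ(f(U), g(V)) : f ∈ S_U, g ∈ S_V}` (equal to `0`, the real `sSup` of
the empty set, if `S_U` or `S_V` is empty). -/
noncomputable def maxCorr (μ : Measure Ω) (U V : Ω → ℝ) : ℝ :=
  sSup {c | ∃ f g : ℝ → ℝ, MemS μ U f ∧ MemS μ V g ∧ c = corr μ (f ∘ U) (g ∘ V)}

/-! As `ρ(-f(U), g(V)) = -ρ(f(U), g(V))`, the square of `ρ_m(U,V)` is the supremum of the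
`ρ(f(U), g(V))²`. For a fixed square-integrable `X`, the centred conditional expectation `E[X|V]` is
the orthogonal projection in `L²` of the centred `X` onto the centred variables `g(V)`. Hence
`ρ(X, g(V))²` is largest at `g(V) = E[X|V]`, where it equals `Var(E[X|V]) / Var(X)`, while
Pythagoras gives `mmse(X|V) = Var(X) - Var(E[X|V])`. -/

section Correlation

variable {α : Type*} {m m₀ : MeasurableSpace α} {μ : Measure[m₀] α} {X Y : α → ℝ}

lemma corr_eq_covariance_div : corr μ X Y = cov[X, Y; μ] / (√Var[X; μ] * √Var[Y; μ]) :=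
  rfl

lemma corr_neg_left : corr μ (-X) Y = -corr μ X Y := by
  rw [corr_eq_covariance_div, corr_eq_covariance_div, covariance_neg_left, variance_neg, neg_div]

lemma corr_sq : corr μ X Y ^ 2 = cov[X, Y; μ] ^ 2 / (Var[X; μ] * Var[Y; μ]) := by
  rw [corr_eq_covariance_div, div_pow, mul_pow, Real.sq_sqrt (variance_nonneg X μ),
    Real.sq_sqrt (variance_nonneg Y μ)]

variable [IsFiniteMeasure μ]

lemma covariance_sq_le_variance_mul_variance (hX : MemLp X 2 μ) (hY : MemLp Y 2 μ) :
    cov[X, Y; μ] ^ 2 ≤ Var[X; μ] * Var[Y; μ] := by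
  have hquad (t : ℝ) : 0 ≤ Var[Y; μ] * (t * t) + 2 * cov[X, Y; μ] * t + Var[X; μ] := by
    calc
      0 ≤ Var[X + t • Y; μ] := variance_nonneg _ μ
      _ = Var[Y; μ] * (t * t) + 2 * cov[X, Y; μ] * t + Var[X; μ] := by
        rw [variance_add hX (hY.const_smul t), variance_smul, covariance_smul_right]
        ring
  have hdiscrim := discrim_le_zero hquad
  rw [discrim] at hdiscrim
  linarith

lemma corr_sq_le_one (hX : MemLp X 2 μ) (hY : MemLp Y 2 μ) : corr μ X Y ^ 2 ≤ 1 := by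
  rw [corr_sq]
  exact div_le_one_of_le₀ (covariance_sq_le_variance_mul_variance hX hY)
    (mul_nonneg (variance_nonneg X μ) (variance_nonneg Y μ))

lemma corr_sq_mul_variance (hX : MemLp X 2 μ) (hY : MemLp Y 2 μ) :
    corr μ X Y ^ 2 * Var[X; μ] = cov[X, Y; μ] ^ 2 / Var[Y; μ] := by
  obtain hVar | hVar := eq_or_ne Var[X; μ] 0
  · have hcov : cov[X, Y; μ] ^ 2 = 0 :=
      le_antisymm (by simpa only [hVar, zero_mul] using
        covariance_sq_le_variance_mul_variance hX hY) (sq_nonneg _)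
    rw [hVar, hcov, mul_zero, zero_div]
  · rw [corr_sq, div_mul_eq_mul_div, mul_comm Var[X; μ], mul_div_mul_right _ _ hVar]

lemma covariance_condExp_left (hm : m ≤ m₀) (hX : MemLp X 2 μ) (hY : MemLp Y 2 μ)
    (hYm : AEStronglyMeasurable[m] Y μ) : cov[μ[X | m], Y; μ] = cov[X, Y; μ] := by
  set a := ∫ ω, X ω ∂μ
  set b := ∫ ω, Y ω ∂μ
  have hX₀ : MemLp (X - fun _ ↦ a) 2 μ := hX.sub (memLp_const a)
  have hY₀ : MemLp (Y - fun _ ↦ b) 2 μ := hY.sub (memLp_const b)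
  have hcenter : μ[X - fun _ ↦ a | m] =ᵐ[μ] μ[X | m] - fun _ ↦ a := by
    simpa only [condExp_const hm a] using
      condExp_sub (hX.integrable one_le_two) (integrable_const a) m
  have hpull : μ[(X - fun _ ↦ a) * (Y - fun _ ↦ b) | m] =ᵐ[μ]
      μ[X - fun _ ↦ a | m] * (Y - fun _ ↦ b) :=
    condExp_mul_of_aestronglyMeasurable_right (hYm.sub aestronglyMeasurable_const)
      (hX₀.integrable_mul hY₀) (hX₀.integrable one_le_two)
  calc
    cov[μ[X | m], Y; μ] = ∫ ω, ((μ[X | m]) ω - a) * (Y ω - b) ∂μ := by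
      rw [covariance, integral_condExp hm]
    _ = ∫ ω, (μ[(X - fun _ ↦ a) * (Y - fun _ ↦ b) | m]) ω ∂μ :=
      integral_congr_ae (hpull.trans (hcenter.mul .rfl)).symm
    _ = cov[X, Y; μ] := integral_condExp hm

lemma covariance_condExp_self (hm : m ≤ m₀) (hX : MemLp X 2 μ) :
    cov[X, μ[X | m]; μ] = Var[μ[X | m]; μ] := by
  have hE : MemLp (μ[X | m]) 2 μ := hX.condExp one_le_two
  rw [← covariance_condExp_left hm hX hE stronglyMeasurable_condExp.aestronglyMeasurable,
    covariance_self hE.aemeasurable]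

lemma corr_sq_mul_variance_le_variance_condExp (hm : m ≤ m₀) (hX : MemLp X 2 μ)
    (hY : MemLp Y 2 μ) (hYm : AEStronglyMeasurable[m] Y μ) :
    corr μ X Y ^ 2 * Var[X; μ] ≤ Var[μ[X | m]; μ] := by
  have hE : MemLp (μ[X | m]) 2 μ := hX.condExp one_le_two
  calc
    corr μ X Y ^ 2 * Var[X; μ] = cov[μ[X | m], Y; μ] ^ 2 / Var[Y; μ] := by
      rw [corr_sq_mul_variance hX hY, covariance_condExp_left hm hX hY hYm]
    _ = corr μ (μ[X | m]) Y ^ 2 * Var[μ[X | m]; μ] := (corr_sq_mul_variance hE hY).symm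
    _ ≤ Var[μ[X | m]; μ] :=
      mul_le_of_le_one_left (variance_nonneg _ μ) (corr_sq_le_one hE hY)

lemma corr_condExp_sq_mul_variance (hm : m ≤ m₀) (hX : MemLp X 2 μ) :
    corr μ X (μ[X | m]) ^ 2 * Var[X; μ] = Var[μ[X | m]; μ] := by
  rw [corr_sq_mul_variance hX (hX.condExp one_le_two), covariance_condExp_self hm hX, sq,
    mul_self_div_self]

end Correlation

section MaximalCorrelation

variable {μ : Measure Ω} {U V X : Ω → ℝ} {f g : ℝ → ℝ} {ε : ℝ}

lemma memS_iff_variance_pos : MemS μ U f ↔ Measurable f ∧ 0 < Var[f ∘ U; μ] :=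
  and_congr_right fun _ ↦ ENNReal.toReal_pos_iff.symm

lemma MemS.neg (hf : MemS μ U f) : MemS μ U (-f) := by
  rw [memS_iff_variance_pos] at hf ⊢
  exact ⟨hf.1.neg, hf.2.trans_eq variance_neg.symm⟩

lemma maxCorr_nonneg : 0 ≤ maxCorr μ U V := by
  by_cases hS : ∃ f g, MemS μ U f ∧ MemS μ V g
  · obtain ⟨f, g, hf, hg⟩ := hS
    refine Real.sSup_nonneg' ?_
    obtain hcorr | hcorr := le_total 0 (corr μ (f ∘ U) (g ∘ V))
    · exact ⟨_, ⟨f, g, hf, hg, rfl⟩, hcorr⟩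
    · exact ⟨_, ⟨-f, g, hf.neg, hg, corr_neg_left.symm⟩, neg_nonneg.2 hcorr⟩
  · refine Real.sSup_nonneg ?_
    rintro _ ⟨f, g, hf, hg, rfl⟩
    exact absurd ⟨f, g, hf, hg⟩ hS

variable [IsFiniteMeasure μ]

lemma MemS.memLp_two (hf : MemS μ U f) (hU : AEMeasurable U μ) : MemLp (f ∘ U) 2 μ :=
  (evariance_lt_top_iff_memLp (hf.1.comp_aemeasurable hU).aestronglyMeasurable).1 hf.2.2

lemma corr_le_maxCorr (hU : AEMeasurable U μ) (hV : AEMeasurable V μ)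
    (hf : MemS μ U f) (hg : MemS μ V g) : corr μ (f ∘ U) (g ∘ V) ≤ maxCorr μ U V := by
  refine le_csSup ⟨1, ?_⟩ ⟨f, g, hf, hg, rfl⟩
  rintro _ ⟨f₁, g₁, hf₁, hg₁, rfl⟩
  exact le_of_abs_le ((sq_le_one_iff_abs_le_one _).1
    (corr_sq_le_one (hf₁.memLp_two hU) (hg₁.memLp_two hV)))

lemma abs_corr_le_maxCorr (hU : AEMeasurable U μ) (hV : AEMeasurable V μ)
    (hf : MemS μ U f) (hg : MemS μ V g) : |corr μ (f ∘ U) (g ∘ V)| ≤ maxCorr μ U V := by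
  refine abs_le'.2 ⟨corr_le_maxCorr hU hV hf hg, ?_⟩
  rw [← corr_neg_left]
  exact corr_le_maxCorr hU hV hf.neg hg

lemma maxCorr_sq_le_iff (hU : AEMeasurable U μ) (hV : AEMeasurable V μ) (hε : 0 ≤ ε) :
    maxCorr μ U V ^ 2 ≤ ε ↔
      ∀ f, MemS μ U f → ∀ g, MemS μ V g → corr μ (f ∘ U) (g ∘ V) ^ 2 ≤ ε := by
  constructor
  · intro h f hf g hg
    exact (sq_le_sq.2 ((abs_corr_le_maxCorr hU hV hf hg).trans (le_abs_self _))).trans h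
  · intro h
    refine (Real.le_sqrt maxCorr_nonneg hε).1 (Real.sSup_le ?_ (Real.sqrt_nonneg ε))
    rintro _ ⟨f, g, hf, hg, rfl⟩
    exact Real.le_sqrt_of_sq_le (h f hf g hg)

lemma forall_corr_sq_le_iff_variance_condExp_le (hV : Measurable V) (hX : MemLp X 2 μ)
    (hVar : 0 < Var[X; μ]) (hε : 0 ≤ ε) :
    (∀ g, MemS μ V g → corr μ X (g ∘ V) ^ 2 ≤ ε) ↔
      Var[μ[X | MeasurableSpace.comap V Real.measurableSpace]; μ] ≤ ε * Var[X; μ] := by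
  constructor
  · intro h
    rw [← corr_condExp_sq_mul_variance hV.comap_le hX]
    refine mul_le_mul_of_nonneg_right ?_ hVar.le
    have hE : StronglyMeasurable[MeasurableSpace.comap V Real.measurableSpace]
        (μ[X | MeasurableSpace.comap V Real.measurableSpace]) := stronglyMeasurable_condExp
    obtain ⟨g, hg, hgV⟩ := hE.measurable.exists_eq_measurable_comp
    rw [hgV]
    obtain hconst | hpos := (variance_nonneg (g ∘ V) μ).eq_or_lt
    · rwa [corr_sq, ← hconst, mul_zero, div_zero]
    · exact h g (memS_iff_variance_pos.2 ⟨hg, hpos⟩)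
  · intro h g hg
    have hgV : Measurable[MeasurableSpace.comap V Real.measurableSpace] (g ∘ V) :=
      hg.1.comp (comap_measurable V)
    exact le_of_mul_le_mul_right
      ((corr_sq_mul_variance_le_variance_condExp hV.comap_le hX (hg.memLp_two hV.aemeasurable)
        hgV.aestronglyMeasurable).trans h) hVar

end MaximalCorrelation

lemma mmse_add_variance_condExp {μ : Measure Ω} [IsProbabilityMeasure μ] {V X : Ω → ℝ}
    (hV : Measurable V) (hX : MemLp X 2 μ) :
    mmse μ X V + Var[μ[X | MeasurableSpace.comap V Real.measurableSpace]; μ] = Var[X; μ] := by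
  rw [← integral_condVar_add_variance_condExp hV.comap_le hX, condVar,
    integral_condExp hV.comap_le]
  rfl

/-- Theorem 6: for non-degenerate real random variables `U, V` and
`ε ∈ [0,1]`, `mmse(f(U)|V) ≥ (1−ε)·Var(f(U))` for every `f ∈ S_U` if and only if
`ρ_m(U,V)² ≤ ε`. -/
theorem mmse_ge_iff_maxCorr_sq_le (μ : Measure Ω) [IsProbabilityMeasure μ]
    (U V : Ω → ℝ) (hU : Measurable U) (hV : Measurable V)
    (hUnc : ¬ ∃ c : ℝ, U =ᵐ[μ] fun _ => c)
    (hVnc : ¬ ∃ c : ℝ, V =ᵐ[μ] fun _ => c)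
    (ε : ℝ) (hε : ε ∈ Set.Icc (0 : ℝ) 1) :
    (∀ f : ℝ → ℝ, MemS μ U f →
        (1 - ε) * variance (f ∘ U) μ ≤ mmse μ (f ∘ U) V) ↔
      maxCorr μ U V ^ 2 ≤ ε := by
  rw [maxCorr_sq_le_iff hU.aemeasurable hV.aemeasurable hε.1]
  refine forall₂_congr fun f hf ↦ ?_
  have hfU : MemLp (f ∘ U) 2 μ := hf.memLp_two hU.aemeasurable
  have hVar : 0 < Var[f ∘ U; μ] := (memS_iff_variance_pos.1 hf).2
  have hpythagoras := mmse_add_variance_condExp hV hfU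
  rw [forall_corr_sq_le_iff_variance_condExp_le hV hfU hVar hε.1]
  constructor <;> intro h <;> linarith
end
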